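/- arXiv:1508.04484 — 3 statements merged into one kernel-verified Lean document; each statement's English description precedes it below -/
import Mathlib

section
/- Let k ≥ 2 and let x = (x_1, …, x_{2k}) be a nondecreasing position (x_1 ≤ x_2 ≤ ⋯ ≤ x_{2k}) of Nim^=_{2k,k}. Then G(x) = 1 if and only if there exist an integer c ≥ 0 and ℓ ∈ {0, 1, …, k−1} such that x_1 = ⋯ = x_{k−ℓ} = 2c and x_{k−ℓ+1} = ⋯ = x_{k+ℓ+1} = 2c+1. -/
/-- A move in Exact k-Nim `Nim^=_{n,k}`: all piles weakly decrease and
exactly `k` piles strictly decrease. -/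
def ExactMove (n k : ℕ) (x x' : Fin n → ℕ) : Prop :=
  (∀ i, x' i ≤ x i) ∧ (Finset.univ.filter fun i => x' i < x i).card = k

/-- There is a chain of `m` consecutive moves starting at `x`. -/
def HasChain (n k : ℕ) (x : Fin n → ℕ) (m : ℕ) : Prop :=
  ∃ f : Fin (m + 1) → Fin n → ℕ, f 0 = x ∧
    ∀ i : Fin m, ExactMove n k (f i.castSucc) (f i.succ)

/-- The Tetris function `T_{n,k}(x)`: the maximum number of consecutive moves
that can be made starting from `x`. -/
noncomputable def tetris (n k : ℕ) (x : Fin n → ℕ) : ℕ :=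
  sSup {m | HasChain n k x m}

/-- The Sprague–Grundy function of Exact k-Nim, defined by the mex recursion
`G(x) = mex {G(x') : x → x'}`.  (For `k ≥ 1` every move satisfies `x' ≠ x`, so the
extra hypothesis `x' ≠ x`, needed for well-foundedness, is automatic.) -/
noncomputable def grundy (n k : ℕ) (x : Fin n → ℕ) : ℕ :=
  sInf {g : ℕ | ∀ x' : Fin n → ℕ, ExactMove n k x x' → x' ≠ x → grundy n k x' ≠ g}
termination_by ∑ i, x i
decreasing_by
  rename_i hmv hne
  have hle := hmv.1
  have hex : ∃ i, x' i < x i := by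
    by_contra hc
    push_neg at hc
    exact hne (funext fun i => le_antisymm (hle i) (hc i))
  obtain ⟨i, hi⟩ := hex
  exact Finset.sum_lt_sum (fun j _ => hle j) ⟨i, Finset.mem_univ i, hi⟩


def cntLE {n : ℕ} (x : Fin n → ℕ) (v : ℕ) : Finset (Fin n) := Finset.univ.filter fun i => x i ≤ v

theorem mem_cntLE {n : ℕ} (x : Fin n → ℕ) (v : ℕ) (i : Fin n) : i ∈ cntLE x v ↔ x i ≤ v := by
  simp [cntLE]

theorem grundy_spec (n k : ℕ) (hk : 1 ≤ k) (x : Fin n → ℕ) :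
    (∀ x', ExactMove n k x x' → grundy n k x' ≠ grundy n k x) ∧
    (∀ g < grundy n k x, ∃ x', ExactMove n k x x' ∧ grundy n k x' = g) := by
  have hne : ∀ x', ExactMove n k x x' → x' ≠ x := by
    rintro x' ⟨_, h⟩ rfl
    simp at h; omega
  set S := {g : ℕ | ∀ x' : Fin n → ℕ, ExactMove n k x x' → x' ≠ x → grundy n k x' ≠ g} with hS
  have hg : grundy n k x = sInf S := by rw [grundy]
  have hfin : ((fun y => grundy n k y) '' Set.Iic x).Finite := (Set.finite_Iic x).image _
  obtain ⟨g, hgn⟩ := hfin.exists_notMem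
  have hnon : S.Nonempty := ⟨g, fun x' hm _ he => hgn ⟨x', fun i => hm.1 i, he⟩⟩
  have hmem := Nat.sInf_mem hnon
  constructor
  · intro x' hm
    rw [hg]
    exact hmem x' hm (hne x' hm)
  · intro g hlt
    rw [hg] at hlt
    have := Nat.notMem_of_lt_sInf hlt
    simp only [hS, Set.mem_setOf_eq] at this
    push Not at this
    obtain ⟨x', h1, _, h2⟩ := this
    exact ⟨x', h1, h2⟩

def PP (k : ℕ) (x : Fin (2 * k) → ℕ) : Prop :=
  ∃ m, (∀ i, m ≤ x i) ∧ k + 1 ≤ (cntLE x m).card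

def QQ (k : ℕ) (x : Fin (2 * k) → ℕ) : Prop :=
  ∃ c, (∀ i, 2 * c ≤ x i) ∧ 1 ≤ (cntLE x (2 * c)).card ∧ (cntLE x (2 * c)).card ≤ k ∧
    2 * k + 1 ≤ (cntLE x (2 * c)).card + (cntLE x (2 * c + 1)).card

theorem low_card {n k : ℕ} {x x' : Fin n → ℕ} (h : ExactMove n k x x') {v : ℕ}
    (hv : ∀ i, v < x i) : (cntLE x' v).card ≤ k := by
  rw [← h.2]
  apply Finset.card_le_card
  intro i hi
  rw [mem_cntLE] at hi
  have := hv i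
  simp; omega

theorem exists_of_card {n : ℕ} {x : Fin n → ℕ} {v : ℕ} (h : 1 ≤ (cntLE x v).card) :
    ∃ i, x i ≤ v := by
  obtain ⟨i, hi⟩ := Finset.card_pos.mp h
  exact ⟨i, (mem_cntLE _ _ _).1 hi⟩

theorem inter_card {k : ℕ} (A B : Finset (Fin (2 * k))) :
    A.card + B.card ≤ (A ∩ B).card + 2 * k := by
  have h1 := Finset.card_union_add_card_inter A B
  have h2 := Finset.card_le_univ (A ∪ B)
  simp at h2
  omega

theorem PP_PP {k : ℕ} {x x' : Fin (2 * k) → ℕ} (h : ExactMove (2 * k) k x x')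
    (hx : PP k x) (hx' : PP k x') : False := by
  obtain ⟨m, h1, h2⟩ := hx
  obtain ⟨m', h1', h2'⟩ := hx'
  rcases lt_trichotomy m' m with hl | rfl | hl
  · have := low_card h (v := m') (fun i => by have := h1 i; omega)
    omega
  · have := inter_card (cntLE x m') (Finset.univ.filter fun i => x' i < x i)
    rw [h.2] at this
    obtain ⟨i, hi⟩ := Finset.card_pos.mp
      (show 0 < (cntLE x m' ∩ Finset.univ.filter fun i => x' i < x i).card by omega)
    simp [mem_cntLE] at hi
    have := h1' i
    omega
  · obtain ⟨i, hi⟩ := exists_of_card (show 1 ≤ (cntLE x m).card by omega)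
    have := h1' i
    have := h.1 i
    omega

theorem QQ_QQ {k : ℕ} {x x' : Fin (2 * k) → ℕ} (h : ExactMove (2 * k) k x x')
    (hx : QQ k x) (hx' : QQ k x') : False := by
  obtain ⟨c, h1, h2, h3, h4⟩ := hx
  obtain ⟨c', h1', h2', h3', h4'⟩ := hx'
  rcases lt_trichotomy c' c with hl | rfl | hl
  · have := low_card h (v := 2 * c' + 1) (fun i => by have := h1 i; omega)
    omega
  · have hc := inter_card (cntLE x (2 * c' + 1)) (Finset.univ.filter fun i => x' i < x i)
    rw [h.2] at hc
    have hd : Disjoint (cntLE x (2 * c'))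
        (cntLE x (2 * c' + 1) ∩ Finset.univ.filter fun i => x' i < x i) := by
      rw [Finset.disjoint_left]
      intro i hi hi'
      simp [mem_cntLE] at hi hi'
      have := h1' i
      omega
    have hu := Finset.card_union_of_disjoint hd
    have hs : (cntLE x (2 * c')) ∪
        (cntLE x (2 * c' + 1) ∩ Finset.univ.filter fun i => x' i < x i) ⊆ cntLE x' (2 * c') := by
      intro i hi
      simp [mem_cntLE] at hi ⊢
      have := h.1 i
      omega
    have := Finset.card_le_card hs
    omega
  · obtain ⟨i, hi⟩ := exists_of_card h2
    have := h1' i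
    have := h.1 i
    omega

theorem PP_QQ {k : ℕ} {x : Fin (2 * k) → ℕ} (hx : PP k x) (hx' : QQ k x) : False := by
  obtain ⟨m, h1, h2⟩ := hx
  obtain ⟨c, h1', h2', h3', h4'⟩ := hx'
  obtain ⟨i, hi⟩ := exists_of_card h2'
  obtain ⟨j, hj⟩ := exists_of_card (show 1 ≤ (cntLE x m).card by omega)
  have := h1 i
  have := h1' j
  have : m = 2 * c := by omega
  subst this
  omega

/-- set piles in `B` to `v`, piles in `C` to `w`. -/
def setTo {n : ℕ} (x : Fin n → ℕ) (B C : Finset (Fin n)) (v w : ℕ) : Fin n → ℕ :=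
  fun i => if i ∈ B then v else if i ∈ C then w else x i

theorem setTo_move {n k : ℕ} {x : Fin n → ℕ} {B C : Finset (Fin n)} {v w : ℕ}
    (hd : Disjoint B C) (hB : ∀ i ∈ B, v < x i) (hC : ∀ i ∈ C, w < x i)
    (hk : B.card + C.card = k) : ExactMove n k x (setTo x B C v w) := by
  have key : ∀ i, (setTo x B C v w i ≤ x i) ∧ (setTo x B C v w i < x i ↔ i ∈ B ∪ C) := by
    intro i
    have := hB i
    have := hC i
    unfold setTo
    split_ifs with h1 h2
    · have := hB i h1
      simp [h1, this, this.le]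
    · have := hC i h2
      simp [h2, this, this.le]
    · simp [h1, h2]
  refine ⟨fun i => (key i).1, ?_⟩
  rw [← hk, ← Finset.card_union_of_disjoint hd]
  congr 1
  ext i
  simpa using (key i).2

theorem exists_min {k : ℕ} (hk : 1 ≤ k) (x : Fin (2 * k) → ℕ) : ∃ i, ∀ j, x i ≤ x j := by
  haveI : Nonempty (Fin (2 * k)) := ⟨⟨0, by omega⟩⟩
  exact Finite.exists_min x

theorem compl_card {k : ℕ} (A : Finset (Fin (2 * k))) : (Aᶜ).card + A.card = 2 * k := by
  have := Finset.card_compl_add_card A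
  simpa using this

theorem to_PP {k : ℕ} (hk : 1 ≤ k) {x : Fin (2 * k) → ℕ} (hx : ¬ PP k x) :
    ∃ x', ExactMove (2 * k) k x x' ∧ PP k x' := by
  obtain ⟨i0, hi0⟩ := exists_min hk x
  have ha : (cntLE x (x i0)).card ≤ k := by
    by_contra hc
    exact hx ⟨x i0, hi0, by omega⟩
  have hcc := compl_card (cntLE x (x i0))
  obtain ⟨B, hB, hBc⟩ := Finset.exists_subset_card_eq (show k ≤ ((cntLE x (x i0))ᶜ).card by omega)
  have hB' : ∀ i ∈ B, x i0 < x i := by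
    intro i hi
    have := hB hi
    simpa [mem_cntLE] using this
  refine ⟨setTo x B ∅ (x i0) 0, setTo_move (by simp) hB' (by simp) (by simp [hBc]), x i0, ?_, ?_⟩
  · intro i
    have := hi0 i
    unfold setTo
    split_ifs <;> simp_all
  · have hi : i0 ∉ B := fun h => lt_irrefl _ (hB' _ h)
    have hci := Finset.card_insert_of_notMem hi
    rw [hBc] at hci
    refine hci.symm.le.trans ?_
    apply Finset.card_le_card
    intro j hj
    rw [mem_cntLE]
    unfold setTo
    rcases Finset.mem_insert.1 hj with rfl | hj
    · simp [hi]
    · simp [hj]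

theorem to_QQ {k : ℕ} (hk : 1 ≤ k) {x : Fin (2 * k) → ℕ} (hx : ¬ PP k x) (hq : ¬ QQ k x) :
    ∃ x', ExactMove (2 * k) k x x' ∧ QQ k x' := by
  obtain ⟨i0, hi0⟩ := exists_min hk x
  have ha : (cntLE x (x i0)).card ≤ k := by
    by_contra hc
    exact hx ⟨x i0, hi0, by omega⟩
  have ha1 : 1 ≤ (cntLE x (x i0)).card := Finset.card_pos.2 ⟨i0, by simp [mem_cntLE]⟩
  have hcc := compl_card (cntLE x (x i0))
  rcases Nat.even_or_odd' (x i0) with ⟨c, hc | hc⟩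
  · rw [hc] at hi0 ha ha1 hcc
    have hs : (cntLE x (2 * c)).card + (cntLE x (2 * c + 1)).card ≤ 2 * k := by
      by_contra h
      exact hq ⟨c, hi0, ha1, ha, by omega⟩
    have hcc2 := compl_card (cntLE x (2 * c + 1))
    obtain ⟨C, hC, hCc⟩ := Finset.exists_subset_card_eq
      (show (cntLE x (2 * c)).card ≤ ((cntLE x (2 * c + 1))ᶜ).card by omega)
    have hC' : ∀ i ∈ C, 2 * c + 1 < x i := by
      intro i hi
      have := hC hi
      simpa [mem_cntLE] using this
    have hCs : C ⊆ (cntLE x (2 * c))ᶜ := by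
      intro i hi
      have := hC' i hi
      simp [mem_cntLE]; omega
    have hsd := Finset.card_sdiff_add_card_eq_card hCs
    obtain ⟨B, hB, hBc⟩ := Finset.exists_subset_card_eq
      (show k - (cntLE x (2 * c)).card ≤ ((cntLE x (2 * c))ᶜ \ C).card by omega)
    have hB' : ∀ i ∈ B, 2 * c < x i ∧ i ∉ C := by
      intro i hi
      have := hB hi
      simpa [mem_cntLE] using this
    have hd : Disjoint B C := Finset.disjoint_left.2 fun i hi => (hB' i hi).2
    have e1 : cntLE (setTo x B C (2 * c) (2 * c + 1)) (2 * c) = cntLE x (2 * c) ∪ B := by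
      ext i
      have h1 := hB' i
      have h2 := hC' i
      simp only [mem_cntLE, Finset.mem_union, setTo]
      by_cases hb : i ∈ B
      · simp [hb]
      · by_cases hcc : i ∈ C
        · have := h2 hcc
          simp [hb, hcc]; omega
        · simp [hb, hcc]
    have hd2 : Disjoint (cntLE x (2 * c)) B := by
      rw [Finset.disjoint_left]
      intro i hi hb
      have := (hB' i hb).1
      rw [mem_cntLE] at hi
      omega
    have e1c : (cntLE (setTo x B C (2 * c) (2 * c + 1)) (2 * c)).card = k := by
      rw [e1, Finset.card_union_of_disjoint hd2]; omega
    have e2 : (cntLE x (2 * c) ∪ B) ∪ C ⊆ cntLE (setTo x B C (2 * c) (2 * c + 1)) (2 * c + 1) := by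
      intro i hi
      rw [← e1] at hi
      simp only [Finset.mem_union, mem_cntLE] at hi ⊢
      rcases hi with hi | hi
      · omega
      · unfold setTo; simp only [hi, if_true]; split_ifs <;> omega
    have hd3 : Disjoint (cntLE x (2 * c) ∪ B) C := by
      rw [Finset.disjoint_union_left]
      refine ⟨?_, hd⟩
      rw [Finset.disjoint_left]
      intro i hi hb
      have := (hC' i hb)
      rw [mem_cntLE] at hi
      omega
    have e2c := Finset.card_le_card e2
    rw [Finset.card_union_of_disjoint hd3, ← e1, e1c] at e2c
    refine ⟨setTo x B C (2 * c) (2 * c + 1),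
      setTo_move hd (fun i hi => (hB' i hi).1) hC' (by omega), c, ?_, by omega, by omega, by omega⟩
    intro i
    have := hi0 i
    unfold setTo
    split_ifs <;> omega
  · rw [hc] at hi0 ha ha1 hcc
    obtain ⟨B, hB, hBc⟩ := Finset.exists_subset_card_eq
      (show k ≤ ((cntLE x (2 * c + 1))ᶜ).card by omega)
    have hB' : ∀ i ∈ B, 2 * c + 1 < x i := by
      intro i hi
      have := hB hi
      simpa [mem_cntLE] using this
    have e1 : cntLE (setTo x B ∅ (2 * c) 0) (2 * c) = B := by
      ext i
      have := hi0 i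
      simp only [mem_cntLE, setTo]
      by_cases hb : i ∈ B
      · simp [hb]
      · simp [hb]; omega
    have hi : i0 ∉ B := fun h => by have := hB' _ h; omega
    have e2 : insert i0 B ⊆ cntLE (setTo x B ∅ (2 * c) 0) (2 * c + 1) := by
      intro j hj
      rw [mem_cntLE]
      unfold setTo
      rcases Finset.mem_insert.1 hj with rfl | hj
      · simp [hi]; omega
      · simp [hj]
    have e2c := Finset.card_le_card e2
    rw [Finset.card_insert_of_notMem hi] at e2c
    refine ⟨setTo x B ∅ (2 * c) 0,
      setTo_move (by simp) (fun i hi => by have := hB' i hi; omega) (by simp) (by simp [hBc]),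
      c, ?_, by rw [e1]; omega, by rw [e1]; omega, by rw [e1]; omega⟩
    intro i
    have := hi0 i
    unfold setTo
    split_ifs with h1 h2
    · omega
    · simp at h2
    · omega

theorem grundy_zero {k : ℕ} (hk : 1 ≤ k) (N : ℕ) : ∀ x : Fin (2 * k) → ℕ, ∑ i, x i < N →
    ((grundy (2 * k) k x = 0 ↔ PP k x) ∧ (grundy (2 * k) k x = 1 ↔ QQ k x)) := by
  induction N with
  | zero => intro x hx; omega
  | succ N ih =>
    intro x hx
    have ih' : ∀ x', ExactMove (2 * k) k x x' →
        ((grundy (2 * k) k x' = 0 ↔ PP k x') ∧ (grundy (2 * k) k x' = 1 ↔ QQ k x')) := by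
      intro x' hm
      apply ih
      obtain ⟨i, hi⟩ := Finset.card_pos.1 (by rw [hm.2]; omega)
      simp at hi
      have := Finset.sum_lt_sum (fun j _ => hm.1 j) ⟨i, Finset.mem_univ i, hi⟩
      omega
    obtain ⟨s1, s2⟩ := grundy_spec (2 * k) k hk x
    have hP : grundy (2 * k) k x = 0 ↔ PP k x := by
      constructor
      · intro h0
        by_contra hc
        obtain ⟨x', hm, hp⟩ := to_PP hk hc
        exact s1 x' hm (by rw [h0, (ih' x' hm).1.2 hp])
      · intro hp
        by_contra hc
        obtain ⟨x', hm, h0⟩ := s2 0 (by omega)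
        exact PP_PP hm hp ((ih' x' hm).1.1 h0)
    refine ⟨hP, ?_⟩
    constructor
    · intro h1
      by_contra hc
      obtain ⟨x', hm, hp⟩ := to_QQ hk (fun h => by have := hP.2 h; omega) hc
      exact s1 x' hm (by rw [h1, (ih' x' hm).2.2 hp])
    · intro hq
      by_contra hc
      have h0 : grundy (2 * k) k x ≠ 0 := fun h => PP_QQ (hP.1 h) hq
      obtain ⟨x', hm, h1⟩ := s2 1 (by omega)
      exact QQ_QQ hm hq ((ih' x' hm).2.1 h1)

theorem mono_cnt {n : ℕ} {x : Fin n → ℕ} (hm : Monotone x) (v : ℕ) (i : Fin n) :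
    (i : ℕ) < (cntLE x v).card ↔ x i ≤ v := by
  constructor
  · intro h
    by_contra hc
    have : cntLE x v ⊆ Finset.Iio i := by
      intro j hj
      rw [mem_cntLE] at hj
      rw [Finset.mem_Iio]
      by_contra h'
      have := hm (not_lt.1 h')
      omega
    have := Finset.card_le_card this
    simp at this
    omega
  · intro h
    have : Finset.Iic i ⊆ cntLE x v := by
      intro j hj
      rw [mem_cntLE]
      exact (hm (Finset.mem_Iic.1 hj)).trans h
    have := Finset.card_le_card this
    simp at this
    omega

theorem grundy_eq_one_iff (k : ℕ) (hk : 2 ≤ k) (x : Fin (2 * k) → ℕ)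
    (hmono : Monotone x) :
    grundy (2 * k) k x = 1 ↔
      ∃ c ℓ : ℕ, ℓ ≤ k - 1 ∧
        (∀ i : Fin (2 * k), (i : ℕ) < k - ℓ → x i = 2 * c) ∧
        (∀ i : Fin (2 * k), k - ℓ ≤ (i : ℕ) → (i : ℕ) ≤ k + ℓ → x i = 2 * c + 1) := by
  rw [(grundy_zero (by omega) _ x (Nat.lt_succ_self _)).2]
  constructor
  · rintro ⟨c, h1, h2, h3, h4⟩
    refine ⟨c, k - (cntLE x (2 * c)).card, by omega, ?_, ?_⟩
    · intro i hi
      have := (mono_cnt hmono (2 * c) i).1 (by omega)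
      have := h1 i
      omega
    · intro i hi hi'
      have := (mono_cnt hmono (2 * c + 1) i).1 (by omega)
      have := mt (mono_cnt hmono (2 * c) i).2 (by omega)
      omega
  · rintro ⟨c, l, hl, h1, h2⟩
    have q0 := h1 ⟨0, by omega⟩ (by simp; omega)
    have q1 := h1 ⟨k - l - 1, by omega⟩ (by simp; omega)
    have q2 := h2 ⟨k - l, by omega⟩ (by simp) (by simp; omega)
    have q3 := h2 ⟨k + l, by omega⟩ (by simp; omega) (by simp)
    have r1 := (mono_cnt hmono (2 * c) ⟨k - l - 1, by omega⟩).2 (by omega)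
    have r2 := mt (mono_cnt hmono (2 * c) ⟨k - l, by omega⟩).1 (by omega)
    have r3 := (mono_cnt hmono (2 * c + 1) ⟨k + l, by omega⟩).2 (by omega)
    simp only at r1 r2 r3
    refine ⟨c, ?_, by omega, by omega, by omega⟩
    intro i
    rw [← q0]
    exact hmono (Fin.mk_le_of_le_val (Nat.zero_le _))
end

section
/- Let x ∈ ℤ_{≥0}^n be a nondecreasing position (x_1 ≤ ⋯ ≤ x_n) of Nim^=_{n,k} with x_{n−k+1} ≥ 1 (so its k largest piles are all nonempty), and let x' be obtained from x by removing exactly one token from each of the k largest piles: x'_i = x_i for i ≤ n−k and x'_i = x_i − 1 for i > n−k. Then T_{n,k}(x') = T_{n,k}(x) − 1. -/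
theorem hasChain_succ (n k : ℕ) (x : Fin n → ℕ) (m : ℕ) :
    HasChain n k x (m + 1) ↔ ∃ y, ExactMove n k x y ∧ HasChain n k y m := by
  constructor
  · rintro ⟨f, h0, hf⟩
    refine ⟨f 1, ?_, fun i => f i.succ, rfl, fun i => ?_⟩
    · have := hf 0
      rw [← h0]
      exact this
    · exact hf i.succ
  · rintro ⟨y, hxy, f, h0, hf⟩
    refine ⟨Fin.cons x f, rfl, fun i => ?_⟩
    refine Fin.cases ?_ (fun j => ?_) i
    · show ExactMove n k x (f 0)
      rw [h0]; exact hxy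
    · exact hf j

theorem chain_nec (n k m : ℕ) : ∀ x : Fin n → ℕ, HasChain n k x m →
    k * m ≤ ∑ i, min (x i) m := by
  induction m with
  | zero => intro x _; simp
  | succ m ih =>
    intro x h
    obtain ⟨y, ⟨hle, hc⟩, hy⟩ := (hasChain_succ n k x m).1 h
    have h1 := ih y hy
    have h2 : ∑ i, (min (y i) m + if y i < x i then 1 else 0) ≤ ∑ i, min (x i) (m + 1) := by
      apply Finset.sum_le_sum
      intro i _
      have := hle i
      split_ifs <;> omega
    rw [Finset.sum_add_distrib, ← Finset.card_filter, hc] at h2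
    rw [Nat.mul_succ]
    omega

theorem top_exists (n : ℕ) (x : Fin n → ℕ) (k : ℕ) (hk : k ≤ n) :
    ∃ S : Finset (Fin n), S.card = k ∧ ∀ i ∈ S, ∀ j ∉ S, x j ≤ x i := by
  induction k with
  | zero => exact ⟨∅, by simp, by simp⟩
  | succ k ih =>
    obtain ⟨S, hS, h⟩ := ih (by omega)
    have hne : (Sᶜ).Nonempty := by
      rw [← Finset.card_pos, Finset.card_compl, Fintype.card_fin]; omega
    obtain ⟨e, he, hmax⟩ := Finset.exists_max_image Sᶜ x hne
    rw [Finset.mem_compl] at he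
    refine ⟨insert e S, by rw [Finset.card_insert_of_notMem he, hS], ?_⟩
    intro i hi j hj
    rw [Finset.mem_insert, not_or] at hj
    rw [Finset.mem_insert] at hi
    rcases hi with rfl | hi
    · exact hmax j (by simpa using hj.2)
    · exact h i hi j hj.2

theorem top_pos (n m : ℕ) (x : Fin n → ℕ) (S : Finset (Fin n))
    (hS : ∀ i ∈ S, ∀ j ∉ S, x j ≤ x i)
    (h : S.card * (m + 1) ≤ ∑ i, min (x i) (m + 1)) : ∀ i ∈ S, 1 ≤ x i := by
  intro i hi
  by_contra h0
  have h0 : x i = 0 := by omega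
  have h1 : ∑ j, min (x j) (m + 1) ≤ ∑ j, if j ∈ S.erase i then (m + 1) else 0 := by
    apply Finset.sum_le_sum
    intro j _
    by_cases hj : j ∈ S
    · by_cases hji : j = i
      · subst hji; simp [h0]
      · simp [hj, hji]
    · have := hS i hi j hj
      simp [hj]; omega
  rw [← Finset.sum_filter] at h1
  simp only [Finset.filter_mem_eq_inter, Finset.univ_inter, Finset.sum_const, smul_eq_mul] at h1
  have h2 := Finset.card_erase_add_one hi
  nlinarith

theorem top_step (n m : ℕ) (x : Fin n → ℕ) (S : Finset (Fin n))
    (hS : ∀ i ∈ S, ∀ j ∉ S, x j ≤ x i) (hpos : ∀ i ∈ S, 1 ≤ x i)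
    (h : S.card * (m + 1) ≤ ∑ i, min (x i) (m + 1)) :
    S.card * m ≤ ∑ i, min (if i ∈ S then x i - 1 else x i) m := by
  by_cases hc : ∃ j, j ∉ S ∧ m + 1 ≤ x j
  · obtain ⟨j, hj, hjm⟩ := hc
    have h1 : ∑ i, (if i ∈ S then m else 0) ≤
        ∑ i, min (if i ∈ S then x i - 1 else x i) m := by
      apply Finset.sum_le_sum
      intro i _
      split_ifs with hi
      · have := hS i hi j hj
        omega
      · omega
    rw [← Finset.sum_filter] at h1
    simpa using h1
  · push Not at hc
    have h1 : ∑ i, min (x i) (m + 1) ≤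
        ∑ i, (min (if i ∈ S then x i - 1 else x i) m + if i ∈ S then 1 else 0) := by
      apply Finset.sum_le_sum
      intro i _
      split_ifs with hi
      · have := hpos i hi
        omega
      · have := hc i hi
        omega
    rw [Finset.sum_add_distrib, ← Finset.card_filter] at h1
    simp only [Finset.filter_mem_eq_inter, Finset.univ_inter] at h1
    rw [Nat.mul_succ] at h
    omega

theorem top_move (n : ℕ) (x : Fin n → ℕ) (S : Finset (Fin n)) (hpos : ∀ i ∈ S, 1 ≤ x i) :
    ExactMove n S.card x (fun i => if i ∈ S then x i - 1 else x i) := by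
  refine ⟨fun i => ?_, ?_⟩
  · dsimp only
    split_ifs <;> omega
  · congr 1
    ext i
    simp only [Finset.mem_filter, Finset.mem_univ, true_and]
    split_ifs with hi
    · have := hpos i hi
      simp only [hi, iff_true]; omega
    · simp [hi]

theorem chain_suf (n k m : ℕ) (hk : k ≤ n) : ∀ x : Fin n → ℕ,
    k * m ≤ ∑ i, min (x i) m → HasChain n k x m := by
  induction m with
  | zero => intro x _; exact ⟨fun _ => x, rfl, fun i => i.elim0⟩
  | succ m ih =>
    intro x h
    obtain ⟨S, hc, hS⟩ := top_exists n x k hk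
    subst hc
    have hp := top_pos n m x S hS h
    exact (hasChain_succ _ _ _ _).2 ⟨_, top_move n x S hp, ih _ (top_step n m x S hS hp h)⟩

theorem chain_bdd (n k : ℕ) (hk1 : 1 ≤ k) (x : Fin n → ℕ) :
    BddAbove {m | HasChain n k x m} := by
  refine ⟨∑ i, x i, fun m hm => ?_⟩
  have h1 := chain_nec n k m x hm
  have h2 : ∑ i, min (x i) m ≤ ∑ i, x i := Finset.sum_le_sum fun i _ => min_le_left _ _
  nlinarith

theorem chain_mem (n k : ℕ) (hk1 : 1 ≤ k) (x : Fin n → ℕ) :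
    HasChain n k x (tetris n k x) :=
  Nat.sSup_mem (s := {m | HasChain n k x m})
    ⟨0, fun _ => x, rfl, fun i => i.elim0⟩ (chain_bdd n k hk1 x)

/-- The slow move reducing the `k` largest piles (each nonempty) by one decreases
the Tetris value by exactly one. -/
theorem tetris_slow_move (n k : ℕ) (hk1 : 1 ≤ k) (hkn : k ≤ n)
    (x : Fin n → ℕ) (hmono : Monotone x)
    (hpos : 1 ≤ x ⟨n - k, by omega⟩)
    (x' : Fin n → ℕ)
    (hx' : x' = fun i : Fin n => if (i : ℕ) < n - k then x i else x i - 1) :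
    tetris n k x' = tetris n k x - 1 := by
  obtain ⟨S, hSd⟩ : ∃ S : Finset (Fin n), ∀ i, i ∈ S ↔ n - k ≤ (i : ℕ) :=
    ⟨Finset.univ.filter fun i => n - k ≤ (i : ℕ), by simp⟩
  have hcard : S.card = k := by
    have : S = Finset.Ici ⟨n - k, by omega⟩ := by
      ext i; rw [hSd, Finset.mem_Ici, Fin.le_def]
    rw [this, Fin.card_Ici]
    simp only
    omega
  have hxS : x' = fun i => if i ∈ S then x i - 1 else x i := by
    rw [hx']
    funext i
    by_cases h : (i : ℕ) < n - k
    · have : i ∉ S := by rw [hSd]; omega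
      simp [h, this]
    · have : i ∈ S := by rw [hSd]; omega
      simp [h, this]
  have hp : ∀ i ∈ S, 1 ≤ x i := fun i hi =>
    hpos.trans (hmono (Fin.le_def.2 ((hSd i).1 hi)))
  have hS : ∀ i ∈ S, ∀ j ∉ S, x j ≤ x i := by
    intro i hi j hj
    rw [hSd] at hi hj
    exact hmono (Fin.le_def.2 (by omega))
  have key : ∀ m, HasChain n k x (m + 1) ↔ HasChain n k x' m := by
    intro m
    subst hcard
    constructor
    · intro h
      rw [hxS]
      exact chain_suf _ _ _ hkn _ (top_step n m x S hS hp (chain_nec _ _ _ _ h))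
    · intro h
      rw [hxS] at h
      exact (hasChain_succ _ _ _ _).2 ⟨_, top_move n x S hp, h⟩
  have a1 : tetris n k x' + 1 ≤ tetris n k x :=
    le_csSup (chain_bdd n k hk1 x) ((key _).2 (chain_mem n k hk1 x'))
  have a2 : tetris n k x - 1 ≤ tetris n k x' := by
    apply le_csSup (chain_bdd n k hk1 x')
    apply (key _).1
    rw [Nat.sub_add_cancel (by omega)]
    exact chain_mem n k hk1 x
  omega
end

section
/- Let x ∈ ℤ_{≥0}^n be a position of Nim^=_{n,k}. If a nonnegative integer g satisfies k·g ≤ Σ_{i=1}^n min(x_i, g) and Σ_{i=1}^n min(x_i, g+1) < k·(g+1), then T_{n,k}(x) = g. -/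
theorem hasChain_succ_iff (n k : ℕ) (x : Fin n → ℕ) (m : ℕ) :
    HasChain n k x (m + 1) ↔ ∃ x', ExactMove n k x x' ∧ HasChain n k x' m := by
  constructor
  · rintro ⟨f, h0, hf⟩
    refine ⟨f 1, ?_, fun i => f i.succ, ?_, ?_⟩
    · have := hf 0
      simpa [h0] using this
    · simp
    · intro i
      have := hf i.succ
      simpa using this
  · rintro ⟨x', hx, f, h0, hf⟩
    refine ⟨Fin.cons x f, by simp, ?_⟩
    intro i
    refine Fin.cases ?_ (fun j => ?_) i
    · simpa [h0] using hx
    · have := hf j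
      rw [← Fin.succ_castSucc]
      simpa using this

theorem hasChain_zero (n k : ℕ) (x : Fin n → ℕ) : HasChain n k x 0 :=
  ⟨fun _ => x, rfl, fun i => i.elim0⟩

theorem hasChain_of_le (n k : ℕ) (m : ℕ) : ∀ (m' : ℕ) (x : Fin n → ℕ), m' ≤ m →
    HasChain n k x m → HasChain n k x m' := by
  induction m with
  | zero => intro m' x h hc; obtain rfl : m' = 0 := by omega
            exact hc
  | succ m ih =>
    intro m' x h hc
    cases m' with
    | zero => exact hasChain_zero n k x
    | succ m' =>
      rw [hasChain_succ_iff] at hc ⊢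
      obtain ⟨x', hx, hc⟩ := hc
      exact ⟨x', hx, ih m' x' (by omega) hc⟩

theorem hasChain_upper (n k : ℕ) (m : ℕ) : ∀ (x : Fin n → ℕ),
    HasChain n k x m → k * m ≤ ∑ i, min (x i) m := by
  induction m with
  | zero => simp
  | succ m ih =>
    intro x hc
    rw [hasChain_succ_iff] at hc
    obtain ⟨x', ⟨hle, hcard⟩, hc⟩ := hc
    have := ih x' hc
    rw [Finset.card_filter] at hcard
    calc k * (m + 1) ≤ ∑ i, min (x' i) m + ∑ i, (if x' i < x i then 1 else 0) := by
          rw [hcard]; linarith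
      _ = ∑ i, (min (x' i) m + (if x' i < x i then 1 else 0)) := Finset.sum_add_distrib.symm
      _ ≤ _ := by
          apply Finset.sum_le_sum
          intro i _
          have := hle i
          split_ifs <;> omega

theorem hasChain_lower (n k : ℕ) (g : ℕ) : ∀ (x : Fin n → ℕ),
    k * g ≤ ∑ i, min (x i) g → HasChain n k x g := by
  induction g with
  | zero => intro x _; exact hasChain_zero n k x
  | succ g ih =>
    intro x h
    set A := Finset.univ.filter (fun i => g + 1 ≤ x i) with hA
    set P := Finset.univ.filter (fun i => 1 ≤ x i) with hP
    have hAP : A ⊆ P := by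
      intro i; simp only [hA, hP, Finset.mem_filter, Finset.mem_univ, true_and]; omega
    suffices hS : ∃ S : Finset (Fin n), S ⊆ P ∧ S.card = k ∧
        k * g ≤ ∑ i, min (x i - (if i ∈ S then 1 else 0)) g by
      obtain ⟨S, hSP, hc, hs⟩ := hS
      rw [hasChain_succ_iff]
      refine ⟨fun i => x i - (if i ∈ S then 1 else 0), ⟨fun i => Nat.sub_le _ _, ?_⟩, ih _ hs⟩
      rw [← hc]
      congr 1
      ext i
      have : i ∈ S → 1 ≤ x i := fun hi => by simpa [hP] using hSP hi
      by_cases hi : i ∈ S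
      · have := this hi
        simp [hi]; omega
      · simp [hi]
    rcases le_total k A.card with hk | hk
    · obtain ⟨S, hSA, hc⟩ := Finset.exists_subset_card_eq hk
      refine ⟨S, hSA.trans hAP, hc, ?_⟩
      calc k * g = ∑ i ∈ S, g := by simp [hc]
        _ ≤ ∑ i ∈ S, min (x i - (if i ∈ S then 1 else 0)) g := by
          apply Finset.sum_le_sum
          intro i hi
          have : g + 1 ≤ x i := by simpa [hA] using hSA hi
          simp only [hi, if_true]; omega
        _ ≤ _ := Finset.sum_le_sum_of_subset (Finset.subset_univ _)
    · have hPk : k ≤ P.card := by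
        have : ∑ i, min (x i) (g + 1) ≤ P.card * (g + 1) := by
          rw [hP, Finset.card_filter, Finset.sum_mul]
          apply Finset.sum_le_sum
          intro i _
          split_ifs <;> omega
        exact Nat.le_of_mul_le_mul_right (h.trans this) (Nat.succ_pos g)
      obtain ⟨S, hAS, hSP, hc⟩ := Finset.exists_subsuperset_card_eq hAP hk hPk
      refine ⟨S, hSP, hc, ?_⟩
      have h3 : ∑ i, min (x i) (g + 1) ≤
          ∑ i, (min (x i - (if i ∈ S then 1 else 0)) g + (if i ∈ S then 1 else 0)) := by
        apply Finset.sum_le_sum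
        intro i _
        by_cases hi : i ∈ S
        · simp only [hi, if_true]; omega
        · have : ¬ g + 1 ≤ x i := fun h => hi (hAS (by simpa [hA] using h))
          simp only [hi, if_false]; omega
      rw [Finset.sum_add_distrib] at h3
      have h4 : ∑ i, (if i ∈ S then 1 else 0) = k := by simp [hc]
      rw [h4] at h3
      linarith

/-- If `k·g ≤ Σᵢ min(xᵢ, g)` and `Σᵢ min(xᵢ, g+1) < k·(g+1)`, then `T_{n,k}(x) = g`. -/
theorem tetris_eq_of_min_sums (n k : ℕ) (hk1 : 1 ≤ k) (hkn : k ≤ n)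
    (x : Fin n → ℕ) (g : ℕ)
    (h1 : k * g ≤ ∑ i, min (x i) g)
    (h2 : ∑ i, min (x i) (g + 1) < k * (g + 1)) :
    tetris n k x = g := by
  have : IsGreatest {m | HasChain n k x m} g := by
    refine ⟨hasChain_lower n k g x h1, ?_⟩
    intro m hm
    by_contra hlt
    have := hasChain_upper n k (g + 1) x (hasChain_of_le n k m (g + 1) x (by omega) hm)
    omega
  exact this.csSup_eq
end
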